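/- arXiv:2110.10264 — 18 statements merged into one kernel-verified Lean document; each statement's English description precedes it below -/
import Mathlib

section
/- Let R be a commutative ring and N a proper ideal of R. Then N is an r-ideal if and only if (aR) ∩ N = aN for every regular element a of R. -/
/-- A proper ideal `N` of a commutative ring is an `r`-ideal if whenever
`a * b ∈ N` and `ann(a) = 0` (i.e. `a` is regular), then `b ∈ N`. -/
def IsRIdeal {R : Type*} [CommRing R] (N : Ideal R) : Prop :=
  N ≠ ⊤ ∧ ∀ a b : R, a * b ∈ N → (∀ r : R, r * a = 0 → r = 0) → b ∈ N

/-- `N` is an `r`-ideal iff `(aR) ∩ N = aN` for every regular `a`. -/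
theorem rIdeal_iff_span_inter_eq_image {R : Type*} [CommRing R] (N : Ideal R)
    (hN : N ≠ ⊤) :
    IsRIdeal N ↔
      ∀ a : R, (∀ r : R, r * a = 0 → r = 0) →
        ((Ideal.span {a} : Ideal R) : Set R) ∩ (N : Set R) = (a * ·) '' (N : Set R) := by
  constructor
  · rintro ⟨_, h⟩ a ha
    ext x
    constructor
    · rintro ⟨hx, hxN⟩
      obtain ⟨b, rfl⟩ := Ideal.mem_span_singleton'.1 hx
      exact ⟨b, h a b (by rwa [mul_comm]) ha, mul_comm a b⟩
    · rintro ⟨n, hn, rfl⟩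
      exact ⟨Ideal.mem_span_singleton'.2 ⟨n, mul_comm n a⟩, N.mul_mem_left a hn⟩
  · intro h
    refine ⟨hN, fun a b hab ha => ?_⟩
    have hm : a * b ∈ ((Ideal.span {a} : Ideal R) : Set R) ∩ (N : Set R) :=
      ⟨Ideal.mem_span_singleton'.2 ⟨b, mul_comm b a⟩, hab⟩
    rw [h a ha] at hm
    obtain ⟨n, hn, hnb⟩ := hm
    have hnb2 : a * n = a * b := hnb
    have h0 : b - n = 0 := ha _ (by rw [sub_mul, mul_comm b, mul_comm n, hnb2, sub_self])
    rw [sub_eq_zero.1 h0]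
    exact hn
end

section
/- Let R be a commutative ring and N a proper ideal of R. Then N is an r-ideal if and only if N = Mᶜ for some ideal M of the total quotient ring Q(R), i.e., N is the contraction of some ideal of Q(R) along the canonical homomorphism R → Q(R). -/
/-- `N` is an `r`-ideal iff it is the contraction of some ideal of the
total quotient ring `Q(R)` (the localization at the set of non-zero-divisors). -/
theorem rIdeal_iff_contraction {R : Type*} [CommRing R] (N : Ideal R) (hN : N ≠ ⊤) :
    IsRIdeal N ↔
      ∃ M : Ideal (FractionRing R),
        N = M.comap (algebraMap R (FractionRing R)) := by
  constructor
  · rintro ⟨_, h⟩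
    refine ⟨N.map (algebraMap R (FractionRing R)), le_antisymm Ideal.le_comap_map ?_⟩
    intro b hb
    rw [Ideal.mem_comap,
      IsLocalization.algebraMap_mem_map_algebraMap_iff (nonZeroDivisors R)] at hb
    obtain ⟨a, ha, hab⟩ := hb
    exact h a b hab fun r hr => (mem_nonZeroDivisors_iff_right.mp ha) r hr
  · rintro ⟨M, rfl⟩
    refine ⟨hN, fun a b hab ha => ?_⟩
    have hu : IsUnit (algebraMap R (FractionRing R) a) :=
      IsLocalization.map_units (FractionRing R)
        (⟨a, mem_nonZeroDivisors_iff_right.mpr ha⟩ : nonZeroDivisors R)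
    rw [Ideal.mem_comap, map_mul] at hab
    rw [Ideal.mem_comap]
    exact (Ideal.unit_mul_mem_iff_mem M hu).mp hab
end

section
/- Let R be a commutative ring. A prime ideal P of R is an r-ideal if and only if P consists entirely of zero divisors, i.e., P ⊆ zd(R). -/
/-- a prime ideal `P` is an `r`-ideal iff it consists of zero divisors. -/
theorem prime_rIdeal_iff_subset_zeroDivisors {R : Type*} [CommRing R] (P : Ideal R)
    (hP : P.IsPrime) :
    IsRIdeal P ↔ ∀ x ∈ P, ∃ r : R, r ≠ 0 ∧ r * x = 0 := by
  constructor
  · rintro ⟨hne, h⟩ x hx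
    by_contra hcon
    apply hne
    rw [Ideal.eq_top_iff_one]
    refine h x 1 (by simpa using hx) ?_
    intro r hr
    by_contra hr0
    exact hcon ⟨r, hr0, hr⟩
  · intro h
    refine ⟨hP.ne_top, ?_⟩
    intro a b hab ha
    rcases hP.mem_or_mem hab with h1 | h1
    · obtain ⟨r, hr0, hr⟩ := h a h1
      exact absurd (ha r hr) hr0
    · exact h1
end

section
/- Let R be a commutative ring. Every minimal prime ideal of R (i.e., every prime ideal of R minimal over the zero ideal) is an r-ideal. -/
/-- every minimal prime ideal of `R` is an `r`-ideal. -/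
theorem minimalPrime_isRIdeal {R : Type*} [CommRing R] (P : Ideal R)
    (hP : P ∈ minimalPrimes R) : IsRIdeal P := by
  have hp : P.IsPrime := hP.1.1
  refine ⟨hp.ne_top, fun a b hab ha => (hp.mem_or_mem hab).resolve_left fun h => ?_⟩
  refine Set.disjoint_left.mp (Ideal.disjoint_nonZeroDivisors_of_mem_minimalPrimes hP) h ?_
  exact mem_nonZeroDivisors_iff_right.mpr ha
end

section
/- Let R be a commutative ring, N an r-ideal of R, and S a subset of R with S ⊄ N. Then (N : S) = {r ∈ R : r·s ∈ N for all s ∈ S} is an r-ideal of R. In particular, for every nonzero x ∈ R, the annihilator ann(x) is an r-ideal of R. -/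
/-- The ideal `(N : S) = {r ∈ R : r • s ∈ N for all s ∈ S}`. -/
def colonSet {R : Type*} [CommRing R] (N : Ideal R) (S : Set R) : Ideal R where
  carrier := {r : R | ∀ s ∈ S, r * s ∈ N}
  add_mem' := by
    intro a b ha hb s hs
    rw [add_mul]; exact N.add_mem (ha s hs) (hb s hs)
  zero_mem' := by intro s hs; simp
  smul_mem' := by
    intro c a ha s hs
    simp only [smul_eq_mul, mul_assoc]
    exact N.mul_mem_left c (ha s hs)

/-- The annihilator ideal `ann(x) = {r ∈ R : r * x = 0}`. -/
def annIdeal {R : Type*} [CommRing R] (x : R) : Ideal R where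
  carrier := {r : R | r * x = 0}
  add_mem' := by
    intro a b ha hb
    simp only [Set.mem_setOf_eq] at *
    rw [add_mul, ha, hb, add_zero]
  zero_mem' := by simp
  smul_mem' := by
    intro c a ha
    simp only [Set.mem_setOf_eq, smul_eq_mul] at *
    rw [mul_assoc, ha, mul_zero]

/-- if `N` is an `r`-ideal and `S ⊄ N`, then `(N : S)` is an `r`-ideal;
in particular, `ann(x)` is an `r`-ideal for every nonzero `x`. -/
theorem colon_isRIdeal {R : Type*} [CommRing R] (N : Ideal R) (hN : IsRIdeal N)
    (S : Set R) (hS : ¬ S ⊆ (N : Set R)) :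
    IsRIdeal (colonSet N S) ∧ ∀ x : R, x ≠ 0 → IsRIdeal (annIdeal x) := by
  refine ⟨⟨?_, ?_⟩, ?_⟩
  · intro h
    apply hS
    intro s hs
    have h1 : (1 : R) ∈ colonSet N S := by rw [h]; trivial
    have h2 : (1 : R) * s ∈ N := h1 s hs
    rw [one_mul] at h2
    exact h2
  · intro a b hab ha s hs
    have h1 : a * b * s ∈ N := hab s hs
    rw [mul_assoc] at h1
    exact hN.2 a (b * s) h1 ha
  · intro x hx
    refine ⟨?_, ?_⟩
    · intro h
      have h1 : (1 : R) ∈ annIdeal x := by rw [h]; trivial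
      have h2 : (1 : R) * x = 0 := h1
      rw [one_mul] at h2
      exact hx h2
    · intro a b hab ha
      have h1 : a * b * x = 0 := hab
      have h2 : b * x = 0 := ha (b * x) (by rw [← h1]; ring)
      exact h2
end

section
/- Let R be a commutative ring. Every proper pure ideal of R is an r-ideal, and every proper von Neumann regular ideal of R is an r-ideal. -/
/-- every proper pure ideal is an `r`-ideal, and every proper
von Neumann regular ideal is an `r`-ideal. -/
theorem pure_and_vonNeumannRegular_isRIdeal {R : Type*} [CommRing R] (N : Ideal R)
    (hN : N ≠ ⊤) :
    ((∀ a ∈ N, ∃ b ∈ N, a = a * b) → IsRIdeal N) ∧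
    ((∀ a ∈ N, ∃ b : R, a = a ^ 2 * b) → IsRIdeal N) := by
  have key : (∀ a ∈ N, ∃ b ∈ N, a = a * b) → IsRIdeal N := by
    intro h
    refine ⟨hN, fun a b hab ha => ?_⟩
    obtain ⟨c, hc, e⟩ := h _ hab
    have h0 : b - b * c = 0 := ha _ (by linear_combination e)
    rw [sub_eq_zero.mp h0]
    exact N.mul_mem_left b hc
  refine ⟨key, fun h => key fun a ha => ?_⟩
  obtain ⟨b, e⟩ := h a ha
  exact ⟨a * b, N.mul_mem_right b ha, by linear_combination e⟩
end

section
/- Let R be a commutative ring and N a proper ideal of R. Then N is an r-ideal if and only if for all ideals J and K of R such that J contains a regular element (J ∩ r(R) ≠ ∅) and J·K ⊆ N, one has K ⊆ N. -/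
/-- `N` is an `r`-ideal iff for all ideals `J, K` with `J` containing a
regular element and `J * K ⊆ N`, one has `K ⊆ N`. -/
theorem rIdeal_iff_ideal_condition {R : Type*} [CommRing R] (N : Ideal R)
    (hN : N ≠ ⊤) :
    IsRIdeal N ↔
      ∀ J K : Ideal R, (∃ a ∈ J, ∀ r : R, r * a = 0 → r = 0) → J * K ≤ N →
        K ≤ N := by
  constructor
  · rintro ⟨_, h⟩ J K ⟨a, haJ, ha⟩ hJK b hb
    exact h a b (hJK (Ideal.mul_mem_mul haJ hb)) ha
  · intro h
    refine ⟨hN, fun a b hab ha => ?_⟩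
    refine h (Ideal.span {a}) (Ideal.span {b})
      ⟨a, Ideal.mem_span_singleton_self a, ha⟩ ?_ (Ideal.mem_span_singleton_self b)
    rw [Ideal.span_singleton_mul_span_singleton, Ideal.span_singleton_le_iff_mem]
    exact hab
end

section
/- Let R be a commutative ring, N an ideal of R containing a regular element (N ∩ r(R) ≠ ∅), and let J and K be r-ideals of R. If N·J = N·K or N ∩ J = N ∩ K, then J = K. -/
/-- if `N` contains a regular element, `J, K` are `r`-ideals and
`N * J = N * K` or `N ⊓ J = N ⊓ K`, then `J = K`. -/
theorem rIdeal_cancellation {R : Type*} [CommRing R] (N J K : Ideal R)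
    (hNreg : ∃ a ∈ N, ∀ r : R, r * a = 0 → r = 0)
    (hJ : IsRIdeal J) (hK : IsRIdeal K)
    (h : N * J = N * K ∨ N ⊓ J = N ⊓ K) : J = K := by
  obtain ⟨a, haN, ha⟩ := hNreg
  have key : ∀ A B : Ideal R, IsRIdeal B → (N * A = N * B ∨ N ⊓ A = N ⊓ B) → A ≤ B := by
    intro A B hB hAB x hx
    refine hB.2 a x ?_ ha
    rcases hAB with h1 | h1
    · have h2 : a * x ∈ N * A := Ideal.mul_mem_mul haN hx
      rw [h1] at h2
      exact (Ideal.mul_le_right : N * B ≤ B) h2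
    · have h2 : a * x ∈ N ⊓ A := ⟨N.mul_mem_right x haN, A.mul_mem_left a hx⟩
      rw [h1] at h2
      exact h2.2
  exact le_antisymm (key J K hK h) (key K J hJ (h.imp Eq.symm Eq.symm))
end

section
/- Let R be a commutative ring, and let N and M be ideals of R such that M contains a regular element (M ∩ r(R) ≠ ∅). If the product N·M is an r-ideal of R, then N = N·M; in particular, N is an r-ideal of R. -/
/-- if `M` contains a regular element and `N * M` is an `r`-ideal,
then `N = N * M` and `N` is an `r`-ideal. -/
theorem rIdeal_of_mul_rIdeal {R : Type*} [CommRing R] (N M : Ideal R)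
    (hMreg : ∃ a ∈ M, ∀ r : R, r * a = 0 → r = 0)
    (h : IsRIdeal (N * M)) : N = N * M ∧ IsRIdeal N := by
  obtain ⟨a, haM, ha⟩ := hMreg
  have e : N = N * M := by
    apply le_antisymm
    · intro x hx
      refine h.2 a x ?_ ha
      rw [mul_comm a x]
      exact Ideal.mul_mem_mul hx haM
    · exact Ideal.mul_le_left
  refine ⟨e, ?_⟩
  rw [e]
  exact h
end

section
/- Let R be a commutative ring and let I₁, I₂, …, Iₙ be prime ideals of R that are pairwise incomparable (Iᵢ ⊄ Iⱼ whenever i ≠ j). If the intersection ⋂ᵢ₌₁ⁿ Iᵢ is an r-ideal of R, then each Iᵢ is an r-ideal of R. -/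
/-- if `I₁, …, Iₙ` are pairwise incomparable prime ideals whose
intersection is an `r`-ideal, then each `Iᵢ` is an `r`-ideal. -/
theorem rIdeal_of_inf_primes {R : Type*} [CommRing R] (n : ℕ) (I : Fin n → Ideal R)
    (hprime : ∀ i, (I i).IsPrime)
    (hincomp : ∀ i j, i ≠ j → ¬ I i ≤ I j)
    (hinf : IsRIdeal (⨅ i, I i)) :
    ∀ i, IsRIdeal (I i) := by
  intro i
  refine ⟨(hprime i).ne_top, fun a b hab ha => ?_⟩
  have hc : ∀ j, ∃ c, c ∉ I i ∧ (j ≠ i → c ∈ I j) := by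
    intro j
    by_cases hj : j = i
    · exact ⟨1, (Ideal.ne_top_iff_one _).1 (hprime i).ne_top, fun h => absurd hj h⟩
    · obtain ⟨c, h1, h2⟩ := SetLike.not_le_iff_exists.1 (hincomp j i hj)
      exact ⟨c, h2, fun _ => h1⟩
  choose c hc1 hc2 using hc
  have hmem : b * ∏ j, c j ∈ ⨅ k, I k := by
    refine hinf.2 a _ ?_ ha
    rw [Ideal.mem_iInf]
    intro k
    by_cases hk : k = i
    · subst hk
      rw [← mul_assoc]
      exact Ideal.mul_mem_right _ _ hab
    · refine Ideal.mul_mem_left _ _ (Ideal.mul_mem_left _ _ ?_)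
      exact Ideal.mem_of_dvd _ (Finset.dvd_prod_of_mem c (Finset.mem_univ k)) (hc2 k hk)
  rw [Ideal.mem_iInf] at hmem
  haveI := hprime i
  rcases (hprime i).mem_or_mem (hmem i) with h | h
  · exact h
  · obtain ⟨j, _, hj⟩ := (Ideal.IsPrime.prod_mem_iff).1 h
    exact absurd hj (hc1 j)
end

section
/- Let R be a nontrivial commutative ring. The following statements are equivalent: (a) R is an integral domain; (b) the zero ideal is the only r-ideal of R; (c) ann(x·y) = ann(x) ∪ ann(y) for all x, y ∈ R. -/
/-- for a nontrivial commutative ring `R`, TFAE: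
(a) `R` is an integral domain;
(b) the zero ideal is the only `r`-ideal of `R`;
(c) `ann(x * y) = ann(x) ∪ ann(y)` for all `x, y ∈ R`. -/
theorem domain_tfae {R : Type*} [CommRing R] [Nontrivial R] :
    (IsDomain R ↔ ∀ N : Ideal R, IsRIdeal N → N = ⊥) ∧
    ((∀ N : Ideal R, IsRIdeal N → N = ⊥) ↔
      ∀ x y : R, {r : R | r * (x * y) = 0} = {r : R | r * x = 0} ∪ {r : R | r * y = 0}) := by
  have ab : IsDomain R → ∀ N : Ideal R, IsRIdeal N → N = ⊥ := by
    intro hd N hN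
    rw [eq_bot_iff]
    intro a ha
    by_contra hne
    have ha0 : a ≠ 0 := fun h => hne (by simp [h])
    apply hN.1
    rw [Ideal.eq_top_iff_one]
    refine hN.2 a 1 (by simpa using ha) ?_
    intro r hr
    exact (mul_eq_zero.mp hr).resolve_right ha0
  have ba : (∀ N : Ideal R, IsRIdeal N → N = ⊥) → IsDomain R := by
    intro h
    have : NoZeroDivisors R := by
      refine ⟨fun {x y} hxy => ?_⟩
      by_cases hx : x = 0
      · exact Or.inl hx
      right
      let N : Ideal R :=
        { carrier := {r | r * x = 0}
          add_mem' := by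
            intro a b ha hb
            simp only [Set.mem_setOf_eq] at *
            rw [add_mul, ha, hb, add_zero]
          zero_mem' := by simp
          smul_mem' := by
            intro c a ha
            simp only [Set.mem_setOf_eq, smul_eq_mul] at *
            rw [mul_assoc, ha, mul_zero] }
      have hm : ∀ r, r ∈ N ↔ r * x = 0 := fun r => Iff.rfl
      have hN : IsRIdeal N := by
        refine ⟨?_, ?_⟩
        · rw [Ne, Ideal.eq_top_iff_one, hm, one_mul]
          exact hx
        · intro a b hab ha
          rw [hm] at hab ⊢
          apply ha
          rw [← hab]
          ring
      have hy : y ∈ N := by rw [hm, mul_comm]; exact hxy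
      rw [h N hN] at hy
      simpa using hy
    exact NoZeroDivisors.to_isDomain R
  have ac : IsDomain R → ∀ x y : R,
      {r : R | r * (x * y) = 0} = {r : R | r * x = 0} ∪ {r : R | r * y = 0} := by
    intro hd x y
    ext r
    simp only [Set.mem_setOf_eq, Set.mem_union, mul_eq_zero]
    tauto
  have ca : (∀ x y : R,
      {r : R | r * (x * y) = 0} = {r : R | r * x = 0} ∪ {r : R | r * y = 0}) → IsDomain R := by
    intro h
    have : NoZeroDivisors R := by
      refine ⟨fun {x y} hxy => ?_⟩
      have h1 : (1 : R) ∈ {r : R | r * (x * y) = 0} := by simp [hxy]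
      rw [h x y] at h1
      simpa using h1
    exact NoZeroDivisors.to_isDomain R
  exact ⟨⟨ab, ba⟩, ⟨fun h => ac (ba h), fun h => ab (ca h)⟩⟩
end

section
/- Let R be a commutative ring and {eᵢ : i ∈ Λ} a set of idempotent elements of R. If the ideal N = Σᵢ∈Λ eᵢ·R generated by these idempotents is a proper ideal of R, then N is an r-ideal. -/
/-- if `{eᵢ}` is a family of idempotents and `N = Σᵢ eᵢR` is proper,
then `N` is an `r`-ideal. -/
theorem sum_idempotents_isRIdeal {R : Type*} [CommRing R] {Λ : Type*} (e : Λ → R)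
    (hidem : ∀ i, e i * e i = e i)
    (hproper : (⨆ i, Ideal.span {e i}) ≠ ⊤) :
    IsRIdeal (⨆ i, Ideal.span {e i}) := by
  refine ⟨hproper, fun a b hab ha => ?_⟩
  have key : ∀ x ∈ (⨆ i, Ideal.span {e i}), ∃ g ∈ (⨆ i, Ideal.span {e i}), g * x = x := by
    intro x hx
    induction hx using Submodule.iSup_induction' with
    | mem i x hx =>
      obtain ⟨c, rfl⟩ := Ideal.mem_span_singleton'.mp hx
      refine ⟨e i, Ideal.mem_iSup_of_mem i (Ideal.mem_span_singleton_self _), ?_⟩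
      linear_combination c * hidem i
    | zero => exact ⟨0, Ideal.zero_mem _, by simp⟩
    | add x y _ _ hx hy =>
      obtain ⟨g, hg, hgx⟩ := hx
      obtain ⟨h, hh, hhy⟩ := hy
      refine ⟨g + h - g * h, Ideal.sub_mem _ (Ideal.add_mem _ hg hh) (Ideal.mul_mem_left _ _ hh), ?_⟩
      linear_combination (1 - h) * hgx + (1 - g) * hhy
  obtain ⟨g, hg, hgx⟩ := key _ hab
  have h1 := ha (g * b - b) (by linear_combination hgx)
  rw [← sub_eq_zero.mp h1]
  exact Ideal.mul_mem_right _ _ hg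
end

section
/- Let R be a commutative ring and x, y ∈ R with x + y = 1. If the ideal N = ann(x) + ann(y) is a proper ideal of R, then N is an r-ideal. -/
/-- if `x + y = 1` and `N = ann(x) + ann(y)` is proper,
then `N` is an `r`-ideal. -/
theorem ann_add_ann_isRIdeal {R : Type*} [CommRing R] (x y : R) (hxy : x + y = 1)
    (hproper : annIdeal x + annIdeal y ≠ ⊤) :
    IsRIdeal (annIdeal x + annIdeal y) := by
  refine ⟨hproper, fun a b hab ha => ?_⟩
  obtain ⟨p, hp, q, hq, hpq⟩ := Submodule.mem_sup.1 hab
  have hp' : p * x = 0 := hp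
  have hq' : q * y = 0 := hq
  have hb : b * x * y = 0 := by
    apply ha
    linear_combination (-(x * y)) * hpq + y * hp' + x * hq'
  refine Submodule.mem_sup.2 ⟨b * y, ?_, b * x, ?_, ?_⟩
  · show b * y * x = 0
    linear_combination hb
  · show b * x * y = 0
    exact hb
  · linear_combination b * hxy
end

section
/- Let R be a reduced commutative ring, I a minimal prime ideal of R, and e ∈ R an idempotent element. If the ideal N = I + ann(e) is a proper ideal of R, then N is an r-ideal. -/
/-- in a reduced ring, if `I` is a minimal prime, `e` is idempotent
and `N = I + ann(e)` is proper, then `N` is an `r`-ideal. -/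
theorem minimalPrime_add_ann_isRIdeal {R : Type*} [CommRing R] [IsReduced R]
    (I : Ideal R) (hI : I ∈ minimalPrimes R) (e : R) (he : e * e = e)
    (hproper : I + annIdeal e ≠ ⊤) :
    IsRIdeal (I + annIdeal e) := by
  refine ⟨hproper, fun a b hab ha => ?_⟩
  have hp : I.IsPrime := hI.1.1
  have haI : a ∉ I := fun h =>
    Set.disjoint_left.mp (Ideal.disjoint_nonZeroDivisors_of_mem_minimalPrimes hI) h
      (mem_nonZeroDivisors_iff_right.mpr ha)
  rw [Submodule.add_eq_sup] at hab ⊢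
  obtain ⟨i, hi, r, hr, hir⟩ := Submodule.mem_sup.mp hab
  have hr' : r * e = 0 := hr
  have h1 : a * (b * e) ∈ I := by
    have : a * (b * e) = i * e := by
      rw [← mul_assoc, ← hir, add_mul, hr', add_zero]
    rw [this]
    exact I.mul_mem_right e hi
  have h2 : b * e ∈ I := (hp.mem_or_mem h1).resolve_left haI
  refine Submodule.mem_sup.mpr ⟨b * e, h2, b - b * e, ?_, by ring⟩
  change (b - b * e) * e = 0
  rw [sub_mul, mul_assoc, he, sub_self]
end

section
/- Let R be a commutative ring and N a proper ideal of R. Then N is a pr-ideal if and only if the radical √N is an r-ideal. -/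
/-- a proper ideal `N` is a `pr`-ideal iff `√N` is an `r`-ideal. -/
theorem prIdeal_iff_radical_rIdeal {R : Type*} [CommRing R] (N : Ideal R)
    (hN : N ≠ ⊤) :
    (∀ a b : R, a * b ∈ N → (∀ r : R, r * a = 0 → r = 0) → ∃ n : ℕ, b ^ n ∈ N) ↔
      IsRIdeal N.radical := by
  constructor
  · intro h
    refine ⟨fun ht => hN (Ideal.radical_eq_top.mp ht), ?_⟩
    rintro a b ⟨n, hn⟩ ha
    rw [mul_pow] at hn
    have hreg : ∀ k : ℕ, ∀ r : R, r * a ^ k = 0 → r = 0 := by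
      intro k
      induction k with
      | zero => intro r hr; simpa using hr
      | succ k ih =>
        intro r hr
        rw [pow_succ, ← mul_assoc] at hr
        exact ih r (ha _ hr)
    obtain ⟨m, hm⟩ := h _ _ hn (hreg n)
    exact ⟨n * m, by rwa [pow_mul]⟩
  · rintro ⟨_, h⟩ a b hab ha
    exact h a b (Ideal.le_radical hab) ha
end

section
/- Let R be a commutative ring. Every proper z⁰-ideal of R is an r-ideal. -/
/-- every proper `z⁰`-ideal is an `r`-ideal. A `z⁰`-ideal is an ideal
`N` such that `a ∈ N`, `b ∈ R` and `ann(a) = ann(b)` imply `b ∈ N`. -/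
theorem z0Ideal_isRIdeal {R : Type*} [CommRing R] (N : Ideal R) (hN : N ≠ ⊤)
    (hz0 : ∀ a ∈ N, ∀ b : R, {r : R | r * a = 0} = {r : R | r * b = 0} → b ∈ N) :
    IsRIdeal N := by
  refine ⟨hN, fun a b hab ha => hz0 (a * b) hab b ?_⟩
  ext r
  simp only [Set.mem_setOf_eq]
  constructor
  · intro h
    apply ha
    rw [← h]
    ring
  · intro h
    rw [mul_left_comm, h, mul_zero]
end

section
/- Let R be a commutative ring, N an r-ideal of R, and I a prime ideal of R that is minimal over N (I ∈ Min(N)). Then I is an r-ideal of R. -/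
/-- if `N` is an `r`-ideal and `I` is a prime ideal minimal over `N`,
then `I` is an `r`-ideal. -/
theorem minimalPrime_over_rIdeal_isRIdeal {R : Type*} [CommRing R] (N I : Ideal R)
    (hN : IsRIdeal N) (hI : I ∈ N.minimalPrimes) : IsRIdeal I := by
  have hp : I.IsPrime := hI.1.1
  refine ⟨hp.ne_top, fun a b hab ha => ?_⟩
  rcases hp.mem_or_mem hab with h | h
  · exfalso
    obtain ⟨y, hy, hay⟩ := Ideal.exists_mul_mem_of_mem_minimalPrimes hI h
    exact hy (hN.2 a y hay ha)
  · exact h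
end

section
/- Let R be a commutative ring and N an r-ideal of R that is maximal with respect to inclusion among all r-ideals of R (i.e., no r-ideal of R strictly contains N). Then N is a prime ideal of R. -/
/-- an `r`-ideal maximal (w.r.t. inclusion) among all `r`-ideals of `R`
is a prime ideal. -/
theorem maximal_rIdeal_isPrime {R : Type*} [CommRing R] (N : Ideal R)
    (hN : IsRIdeal N) (hmax : ∀ M : Ideal R, IsRIdeal M → N ≤ M → N = M) :
    N.IsPrime := by
  refine ⟨hN.1, ?_⟩
  intro a b hab
  by_cases ha : a ∈ N
  · exact Or.inl ha
  right
  let M : Ideal R := Submodule.comap (LinearMap.mulRight R a) N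
  have hmem : ∀ x, x ∈ M ↔ x * a ∈ N := fun x => Iff.rfl
  have hM : IsRIdeal M := by
    refine ⟨?_, ?_⟩
    · intro h
      apply ha
      have h1 : (1 : R) ∈ M := h ▸ Submodule.mem_top
      simpa using (hmem 1).1 h1
    · intro s x hsx hs
      rw [hmem] at hsx ⊢
      exact hN.2 s (x * a) (by rwa [mul_assoc] at hsx) hs
  have hle : N ≤ M := fun x hx => (hmem x).2 (N.mul_mem_right a hx)
  rw [hmax M hM hle, hmem, mul_comm]
  exact hab
end
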